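/- Let G be a distance-regular graph of diameter 3 with intersection array {k, b₁, b₂; 1, c₂, c₃}, let q ≠ 0 be a real number, and let v be a nonzero real vector orthogonal to the all-ones vector with Av = θv. Then 𝔻_q v = R_q(θ)·v, where R_q(θ) = −(1/(c₂q²))·((q²+q+1)c₂ − k + ((q+1)c₂ − a₁)θ + θ²). -/

import Mathlib

open Matrix

variable {V : Type*} [Fintype V] [DecidableEq V]

/-- The distance-`i` matrix of a graph: the `(x,y)` entry is 1 if `dist x y = i`, else 0. -/
noncomputable def distM (G : SimpleGraph V) (i : ℕ) : Matrix V V ℝ :=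
  Matrix.of fun x y => if G.dist x y = i then (1 : ℝ) else 0

/-- The `q`-distance matrix `𝔻_q = ∑_{i=1}^D (1 + 1/q + ⋯ + 1/q^{i-1}) • A_i`. -/
noncomputable def qDist (G : SimpleGraph V) (D : ℕ) (q : ℝ) : Matrix V V ℝ :=
  ∑ i ∈ Finset.Icc 1 D, (∑ j ∈ Finset.range i, (1 / q) ^ j) • distM G i

/-- `G` is distance-regular with diameter `D` and intersection numbers `b i`, `c i`
(with `c 1 = 1`): for any vertices `x, y` at distance `i ≤ D`, the number of neighbors
of `y` at distance `i - 1` from `x` is `c i` and the number of neighbors of `y` at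
distance `i + 1` from `x` is `b i`. -/
def IsDRG (G : SimpleGraph V) (D : ℕ) (b c : ℕ → ℕ) : Prop :=
  G.Connected ∧
  (∀ x y : V, G.dist x y ≤ D) ∧
  (∃ x y : V, G.dist x y = D) ∧
  c 1 = 1 ∧
  ∀ i ≤ D, ∀ x y : V, G.dist x y = i →
    ({z : V | G.Adj y z ∧ G.dist x z = i - 1} : Set V).ncard = c i ∧
    ({z : V | G.Adj y z ∧ G.dist x z = i + 1} : Set V).ncard = b i

/-- `a i = k - b i - c i` as a real number, where `k = b 0`. -/
noncomputable def aInt (b c : ℕ → ℕ) (i : ℕ) : ℝ := (b 0 : ℝ) - (b i : ℝ) - (c i : ℝ)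

/-!
The relation `A₁² = k I + a₁ A₁ + c₂ A₂` makes `v` an eigenvector of `A₂`, with eigenvalue
`(θ² - a₁ θ - k) / c₂`. As `I + A₁ + A₂ + A₃ = J` and `J v = 0`, it is then an eigenvector of `A₃`
too, and `𝔻_q v` is read off.
-/

section Distance

variable {W : Type*} {G : SimpleGraph W} {x y : W} {i : ℕ}

theorem dist_getVert_of_length_eq_dist {p : G.Walk x y} (hp : p.length = G.dist x y)
    (hi : i ≤ p.length) : G.dist x (p.getVert i) = i := by
  rw [← SimpleGraph.length_eq_dist_of_subwalk hp (p.isSubwalk_take i), SimpleGraph.Walk.take_length,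
    min_eq_left hi]

theorem ncard_adj_eq_add_add [Finite W] (h : G.dist x y = i + 1) :
    {z | G.Adj y z}.ncard = {z | G.Adj y z ∧ G.dist x z = i}.ncard +
      {z | G.Adj y z ∧ G.dist x z = i + 1}.ncard +
      {z | G.Adj y z ∧ G.dist x z = i + 2}.ncard := by
  rw [← Set.ncard_union_eq, ← Set.ncard_union_eq]
  · congr 1
    ext z
    have hz (hyz : G.Adj y z) := hyz.diff_dist_adj (u := x)
    grind
  all_goals
    rw [Set.disjoint_left]
    grind

end Distance

section DistanceMatrix

variable {W : Type*}

theorem distM_zero [DecidableEq W] {G : SimpleGraph W} (hG : G.Connected) : distM G 0 = 1 := by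
  ext x y
  simp [distM, Matrix.one_apply, hG.dist_eq_zero_iff]

theorem distM_one (G : SimpleGraph W) [DecidableRel G.Adj] : distM G 1 = G.adjMatrix ℝ := by
  ext x y
  simp [distM, SimpleGraph.adjMatrix_apply]

theorem distM_mul_distM_one_apply [Fintype W] (G : SimpleGraph W) (i : ℕ) (x y : W) :
    (distM G i * distM G 1) x y = ({z | G.Adj y z ∧ G.dist x z = i}.ncard : ℝ) := by
  classical
  have hset : {z | G.Adj y z ∧ G.dist x z = i} = {z ∈ G.neighborFinset y | G.dist x z = i} := by
    ext z
    simp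
  rw [distM_one, SimpleGraph.mul_adjMatrix_apply, hset, Set.ncard_coe_finset]
  simp only [distM, Matrix.of_apply, Finset.sum_boole]

theorem sum_distM {G : SimpleGraph W} {D : ℕ} (hD : ∀ x y : W, G.dist x y ≤ D) :
    ∑ i ∈ Finset.range (D + 1), distM G i = Matrix.of fun _ _ ↦ 1 := by
  ext x y
  simp [distM, Matrix.sum_apply, Nat.lt_succ_of_le (hD x y)]

theorem sum_distM_mulVec_eq_zero [Fintype W] {G : SimpleGraph W} {D : ℕ}
    (hD : ∀ x y : W, G.dist x y ≤ D) {v : W → ℝ} (hv : ∑ x, v x = 0) :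
    ∑ i ∈ Finset.range (D + 1), distM G i *ᵥ v = 0 := by
  rw [← Matrix.sum_mulVec, sum_distM hD]
  ext x
  simp [Matrix.mulVec, dotProduct, hv]

theorem qDist_three (G : SimpleGraph W) (q : ℝ) :
    qDist G 3 q = distM G 1 + (1 + 1 / q) • distM G 2 +
      (1 + 1 / q + (1 / q) ^ 2) • distM G 3 := by
  simp [qDist, Finset.sum_Icc_succ_top, Finset.sum_range_succ]

end DistanceMatrix

namespace IsDRG

variable {W : Type*} {G : SimpleGraph W} {D : ℕ} {b c : ℕ → ℕ} {x y : W} {i : ℕ}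

theorem connected (hG : IsDRG G D b c) : G.Connected := hG.1

theorem dist_le (hG : IsDRG G D b c) (x y : W) : G.dist x y ≤ D := hG.2.1 x y

theorem ncard_adj_dist_pred (hG : IsDRG G D b c) (h : G.dist x y = i + 1) :
    {z | G.Adj y z ∧ G.dist x z = i}.ncard = c (i + 1) :=
  (hG.2.2.2.2 (i + 1) (h ▸ hG.dist_le x y) x y h).1

theorem ncard_adj_dist_succ (hG : IsDRG G D b c) (h : G.dist x y = i) :
    {z | G.Adj y z ∧ G.dist x z = i + 1}.ncard = b i :=
  (hG.2.2.2.2 i (h ▸ hG.dist_le x y) x y h).2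

theorem ncard_adj (hG : IsDRG G D b c) (y : W) : {z | G.Adj y z}.ncard = b 0 := by
  simpa using hG.ncard_adj_dist_succ (SimpleGraph.dist_self (v := y))

theorem ncard_adj_dist_eq [Finite W] (hG : IsDRG G D b c) (h : G.dist x y = i + 1) :
    ({z | G.Adj y z ∧ G.dist x z = i + 1}.ncard : ℝ) = aInt b c (i + 1) := by
  have hcount := ncard_adj_eq_add_add h
  rw [hG.ncard_adj, hG.ncard_adj_dist_pred h, hG.ncard_adj_dist_succ h] at hcount
  rw [aInt, hcount]
  push_cast
  ring

theorem c_succ_ne_zero [Finite W] (hG : IsDRG G D b c) (hi : i < D) : c (i + 1) ≠ 0 := by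
  obtain ⟨x, y, hxy⟩ := hG.2.2.1
  obtain ⟨p, hp⟩ := hG.connected.exists_walk_length_eq_dist x y
  have hip : i < p.length := by omega
  rw [← hG.ncard_adj_dist_pred (dist_getVert_of_length_eq_dist hp hip)]
  exact Set.ncard_ne_zero_of_mem
    ⟨(p.adj_getVert_succ hip).symm, dist_getVert_of_length_eq_dist hp hip.le⟩

theorem distM_succ_mul_distM_one [Fintype W] (hG : IsDRG G D b c) (i : ℕ) :
    distM G (i + 1) * distM G 1 =
      (b i : ℝ) • distM G i + aInt b c (i + 1) • distM G (i + 1) +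
        (c (i + 2) : ℝ) • distM G (i + 2) := by
  ext x y
  rw [distM_mul_distM_one_apply]
  simp only [distM, Matrix.add_apply, Matrix.smul_apply, Matrix.of_apply, smul_eq_mul]
  by_cases h_pred : G.dist x y = i
  · simp [h_pred, hG.ncard_adj_dist_succ h_pred]
  by_cases h_eq : G.dist x y = i + 1
  · simp [h_eq, hG.ncard_adj_dist_eq h_eq]
  by_cases h_succ : G.dist x y = i + 2
  · simp [h_succ, hG.ncard_adj_dist_pred h_succ]
  have h_empty : {z | G.Adj y z ∧ G.dist x z = i + 1} = ∅ := by
    ext z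
    have hz (hyz : G.Adj y z) := hyz.diff_dist_adj (u := x)
    grind
  simp [h_pred, h_eq, h_succ, h_empty]

theorem distM_two_mulVec [Fintype W] (hG : IsDRG G D b c) (hD : 1 < D) {θ : ℝ} {v : W → ℝ}
    (hAv : distM G 1 *ᵥ v = θ • v) :
    distM G 2 *ᵥ v = ((θ ^ 2 - aInt b c 1 * θ - b 0) / c 2) • v := by
  classical
  have hc : (c 2 : ℝ) ≠ 0 := Nat.cast_ne_zero.mpr (hG.c_succ_ne_zero hD)
  have h_rec : (θ ^ 2) • v =
      (b 0 : ℝ) • v + (aInt b c 1 * θ) • v + (c 2 : ℝ) • distM G 2 *ᵥ v := by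
    simpa [← Matrix.mulVec_mulVec, Matrix.add_mulVec, Matrix.smul_mulVec, Matrix.mulVec_smul, hAv,
      distM_zero hG.connected, smul_smul, sq] using
      congrArg (· *ᵥ v) (hG.distM_succ_mul_distM_one 0)
  rw [div_eq_inv_mul, mul_smul, eq_inv_smul_iff₀ hc, sub_smul, sub_smul, h_rec]
  abel

end IsDRG

/-- Proposition 3.2: for a distance-regular graph of diameter 3 with
intersection array `{k, b₁, b₂; 1, c₂, c₃}`, `q ≠ 0`, and a nonzero eigenvector `v` of the
adjacency matrix with eigenvalue `θ` that is orthogonal to the all-ones vector,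
`𝔻_q v = R_q(θ) • v` where `R_q(θ) = −(1/(c₂q²))((q²+q+1)c₂ − k + ((q+1)c₂ − a₁)θ + θ²)`. -/
theorem stmt3 (G : SimpleGraph V) (b c : ℕ → ℕ) (hG : IsDRG G 3 b c)
    (q : ℝ) (hq : q ≠ 0) (θ : ℝ) (v : V → ℝ) (hv : v ≠ 0)
    (horth : ∑ x : V, v x = 0)
    (hAv : (distM G 1).mulVec v = θ • v) :
    (qDist G 3 q).mulVec v =
      (-(1 / ((c 2 : ℝ) * q ^ 2)) *
        ((q ^ 2 + q + 1) * (c 2 : ℝ) - (b 0 : ℝ)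
          + ((q + 1) * (c 2 : ℝ) - aInt b c 1) * θ + θ ^ 2)) • v := by
  set p₂ := (θ ^ 2 - aInt b c 1 * θ - b 0) / c 2 with hp₂
  have hA₂ : distM G 2 *ᵥ v = p₂ • v := hG.distM_two_mulVec (by norm_num) hAv
  have hA₃ : distM G 3 *ᵥ v = (-(1 + θ + p₂)) • v := by
    have hsum := sum_distM_mulVec_eq_zero hG.dist_le horth
    simp only [Finset.sum_range_succ, Finset.sum_range_zero, zero_add, distM_zero hG.connected,
      Matrix.one_mulVec, hAv, hA₂] at hsum
    rw [eq_neg_of_add_eq_zero_right hsum]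
    module
  have hc₂ : (c 2 : ℝ) ≠ 0 := Nat.cast_ne_zero.mpr (hG.c_succ_ne_zero (by norm_num))
  calc qDist G 3 q *ᵥ v
      = (θ + (1 + 1 / q) * p₂ + (1 + 1 / q + (1 / q) ^ 2) * -(1 + θ + p₂)) • v := by
        simp only [qDist_three, Matrix.add_mulVec, Matrix.smul_mulVec, hAv, hA₂, hA₃]
        module
    _ = _ := by
        congr 1
        rw [hp₂]
        field_simp
        ring
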